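/- arXiv:2501.12293 — 2 statements merged into one kernel-verified Lean document; each statement's English description precedes it below -/
import Mathlib

section
/- Let G be a (c,d,α,δ)-bipartite expander with n left vertices, C₀ ⊆ F₂^d a linear code with minimum distance d₀, and T(G,C₀) the associated Tanner code. Let x ∈ F₂^n, y ∈ T(G,C₀) with Hamming distance d_H(x, y) ≤ αn, and let F = {i : x_i ≠ y_i} and U(x) = {v ∈ R : x_{N(v)} ∉ C₀}. Then c|F| ≥ |U(x)| ≥ |N_{≤ d₀−1}(F)| ≥ ((δd₀ − 1)/(d₀ − 1)) · c|F| (assuming d₀ ≥ 2). -/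
open Finset
open scoped Classical

/-!
Count the edges leaving `F`: every `u ∈ F` has at most `c` of them, every vertex of `N(F)` receives
at least one, and every vertex of `N(F)` outside `N_{≤ t}(F)` receives at least `t + 1`. Hence
`|N_{≤ t}(F)| + (t + 1) (|N(F)| - |N_{≤ t}(F)|) ≤ c|F|`, and expansion bounds `|N(F)|` from below.
The local views of `x` and `y` at a check `v` are at Hamming distance exactly `|N(v) ∩ F|`. So a
check outside `N(F)` stays satisfied, while for `v ∈ N_{≤ d₀ - 1}(F)` the view of `x` is too close
to the codeword seen in `y`, without being equal to it, to be a codeword itself.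
-/

section DoubleCounting

variable {L R : Type*} [Fintype R] (r : R → L → Prop) [∀ v u, Decidable (r v u)] (F : Finset L)

/-- The neighborhood `N(F)` of a set `F` of left vertices in the bipartite graph whose edges are
given by the relation `r`. -/
def rightNeighbors : Finset R := {v | ∃ u ∈ F, r v u}

/-- The set `N_{≤ t}(F)` of vertices of `N(F)` with at most `t` neighbors in `F`; a vertex
without neighbors in `F` does not count. -/
def rightNeighborsLE (t : ℕ) : Finset R :=
  {v | 0 < #(F.bipartiteAbove r v) ∧ #(F.bipartiteAbove r v) ≤ t}

variable {r F}

theorem sum_card_bipartiteAbove_le {c : ℕ} (hdeg : ∀ u ∈ F, #(univ.bipartiteBelow r u) ≤ c) :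
    ∑ v, #(F.bipartiteAbove r v) ≤ c * #F := by
  rw [sum_card_bipartiteAbove_eq_sum_card_bipartiteBelow, mul_comm]
  exact sum_le_card_nsmul F _ c hdeg

theorem rightNeighbors_eq_filter_card_pos :
    rightNeighbors r F = ({v | 0 < #(F.bipartiteAbove r v)} : Finset R) := by
  ext v
  simp [rightNeighbors, card_pos, Finset.Nonempty]

theorem card_rightNeighbors_le_sum :
    #(rightNeighbors r F) ≤ ∑ v, #(F.bipartiteAbove r v) := by
  rw [rightNeighbors_eq_filter_card_pos, card_filter]
  refine sum_le_sum fun v _ => ?_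
  split_ifs <;> omega

theorem succ_mul_card_rightNeighbors_le (t : ℕ) :
    (t + 1) * #(rightNeighbors r F) ≤
      ∑ v, #(F.bipartiteAbove r v) + t * #(rightNeighborsLE r F t) := by
  rw [rightNeighbors_eq_filter_card_pos, rightNeighborsLE, card_filter, card_filter, mul_sum,
    mul_sum, ← sum_add_distrib]
  refine sum_le_sum fun v _ => ?_
  split_ifs <;> omega

theorem le_card_rightNeighborsLE {c t : ℕ} {δ : ℝ} (ht : 0 < t)
    (hdeg : ∀ u ∈ F, #(univ.bipartiteBelow r u) ≤ c)
    (hexp : δ * c * #F ≤ #(rightNeighbors r F)) :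
    (δ * (t + 1) - 1) / t * (c * #F) ≤ #(rightNeighborsLE r F t) := by
  have hcount : ((t : ℝ) + 1) * #(rightNeighbors r F) ≤
      c * #F + t * #(rightNeighborsLE r F t) := by
    exact_mod_cast (succ_mul_card_rightNeighbors_le t).trans
      (Nat.add_le_add_right (sum_card_bipartiteAbove_le hdeg) _)
  rw [div_mul_eq_mul_div, div_le_iff₀ (by exact_mod_cast ht)]
  calc (δ * (t + 1) - 1) * (c * #F) = (t + 1) * (δ * c * #F) - c * #F := by ring
    _ ≤ (t + 1) * #(rightNeighbors r F) - c * #F := by gcongr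
    _ ≤ #(rightNeighborsLE r F t) * t := by linarith

end DoubleCounting

theorem pairwise_le_hammingDist_of_le_hammingNorm {ι K : Type*} [Fintype ι] [DecidableEq K]
    [AddGroup K] {C : AddSubgroup (ι → K)} {d₀ : ℕ}
    (hC : ∀ w ∈ C, w ≠ 0 → d₀ ≤ hammingNorm w) :
    (C : Set (ι → K)).Pairwise fun w w' => d₀ ≤ hammingDist w w' := by
  intro w hw w' hw' hne
  rw [hammingDist_eq_hammingNorm]
  exact hC _ (C.add_mem (C.neg_mem hw) hw') (mt neg_add_eq_zero.mp hne)

section Tanner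

variable {L R ι K : Type*} [Fintype L] [DecidableEq K]

/-- The bipartite graph of a Tanner code: the check `v` is adjacent to the coordinates it reads,
`ν v i` being the `i`-th of them. -/
abbrev CheckAdj (ν : R → ι → L) (v : R) (u : L) : Prop := ∃ i, ν v i = u

/-- The set of coordinates in which the words `x` and `y` differ. -/
def diffCoords (x y : L → K) : Finset L := {u | x u ≠ y u}

variable {ν : R → ι → L} {C : Set (ι → K)} {x y : L → K}
  [∀ v u, Decidable (CheckAdj ν v u)]

theorem mem_bipartiteAbove_checkAdj_diffCoords {v : R} {u : L} :
    u ∈ (diffCoords x y).bipartiteAbove (CheckAdj ν) v ↔ x u ≠ y u ∧ ∃ i, ν v i = u := by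
  simp [diffCoords]

theorem hammingDist_comp_eq_card_bipartiteAbove [Fintype ι] {v : R}
    (hinj : Function.Injective (ν v)) :
    hammingDist (x ∘ ν v) (y ∘ ν v) = #((diffCoords x y).bipartiteAbove (CheckAdj ν) v) := by
  refine card_nbij (ν v) (fun i hi => ?_) hinj.injOn fun u hu => ?_
  · exact mem_bipartiteAbove_checkAdj_diffCoords.mpr ⟨(mem_filter.mp hi).2, i, rfl⟩
  · obtain ⟨hne, i, rfl⟩ := mem_bipartiteAbove_checkAdj_diffCoords.mp hu
    exact ⟨i, by simpa using hne, rfl⟩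

variable [Fintype R]

/-- The set `U(x)` of checks whose local view of the word `x` is not in the code `C`. -/
noncomputable def unsatisfiedChecks (ν : R → ι → L) (C : Set (ι → K)) (x : L → K) : Finset R :=
  {v | x ∘ ν v ∉ C}

theorem unsatisfiedChecks_subset_rightNeighbors (hy : ∀ v, y ∘ ν v ∈ C) :
    unsatisfiedChecks ν C x ⊆ rightNeighbors (CheckAdj ν) (diffCoords x y) := by
  intro v hv
  have hxC : x ∘ ν v ∉ C := (mem_filter.mp hv).2
  have hne : x ∘ ν v ≠ y ∘ ν v := fun h => hxC (h ▸ hy v)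
  obtain ⟨i, hi⟩ := Function.ne_iff.mp hne
  exact mem_filter.mpr ⟨mem_univ v, ν v i, mem_filter.mpr ⟨mem_univ _, hi⟩, i, rfl⟩

theorem rightNeighborsLE_subset_unsatisfiedChecks [Fintype ι] {t : ℕ}
    (hinj : ∀ v, Function.Injective (ν v))
    (hC : C.Pairwise fun w w' => t < hammingDist w w') (hy : ∀ v, y ∘ ν v ∈ C) :
    rightNeighborsLE (CheckAdj ν) (diffCoords x y) t ⊆ unsatisfiedChecks ν C x := by
  intro v hv
  obtain ⟨hpos, hle⟩ := (mem_filter.mp hv).2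
  rw [← hammingDist_comp_eq_card_bipartiteAbove (hinj v)] at hpos hle
  have hxC : x ∘ ν v ∉ C := fun hx => (hC hx (hy v) (hammingDist_pos.mp hpos)).not_ge hle
  exact mem_filter.mpr ⟨mem_univ v, hxC⟩

theorem stmt3_general [Fintype ι] {c d₀ : ℕ} {α δ : ℝ} (hinj : ∀ v, Function.Injective (ν v))
    (hdeg : ∀ u, #(univ.bipartiteBelow (CheckAdj ν) u) ≤ c)
    (hexp : ∀ S : Finset L, (#S : ℝ) ≤ α * Fintype.card L →
      δ * c * #S ≤ #(rightNeighbors (CheckAdj ν) S))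
    (hC : C.Pairwise fun w w' => d₀ ≤ hammingDist w w') (hd₀ : 2 ≤ d₀)
    (hy : ∀ v, y ∘ ν v ∈ C) (hxy : (hammingDist x y : ℝ) ≤ α * Fintype.card L) :
    (#(unsatisfiedChecks ν C x) : ℝ) ≤ c * #(diffCoords x y) ∧
      (#(rightNeighborsLE (CheckAdj ν) (diffCoords x y) (d₀ - 1)) : ℝ) ≤
        #(unsatisfiedChecks ν C x) ∧
      (δ * d₀ - 1) / (d₀ - 1) * (c * #(diffCoords x y)) ≤
        #(rightNeighborsLE (CheckAdj ν) (diffCoords x y) (d₀ - 1)) := by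
  obtain ⟨t, rfl⟩ : ∃ t, d₀ = t + 1 := ⟨d₀ - 1, by omega⟩
  have hdegF : ∀ u ∈ diffCoords x y, #(univ.bipartiteBelow (CheckAdj ν) u) ≤ c :=
    fun u _ => hdeg u
  refine ⟨?_, ?_, ?_⟩
  · exact_mod_cast (card_le_card (unsatisfiedChecks_subset_rightNeighbors hy)).trans
      (card_rightNeighbors_le_sum.trans (sum_card_bipartiteAbove_le hdegF))
  · exact_mod_cast card_le_card (rightNeighborsLE_subset_unsatisfiedChecks hinj hC hy)
  · simpa using le_card_rightNeighborsLE (by omega) hdegF (hexp _ hxy)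

end Tanner

/-- For `x ∈ F₂ⁿ`, `y ∈ T(G,C₀)` with `d_H(x,y) ≤ αn`,
`F = {i : x_i ≠ y_i}` and the set `U(x)` of unsatisfied checks,
`c|F| ≥ |U(x)| ≥ |N_{≤ d₀−1}(F)| ≥ ((δd₀ − 1)/(d₀ − 1)) · c|F|` (for `d₀ ≥ 2`). -/
theorem stmt3 (n c d d₀ : ℕ) (α δ : ℝ) (R : Type*) [Fintype R]
    (νe : R → Fin d → Fin n)
    (hinj : ∀ v : R, Function.Injective (νe v))
    (hleft : ∀ u : Fin n, (Finset.univ.filter (fun v : R => ∃ i, νe v i = u)).card = c)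
    (hexp : ∀ S : Finset (Fin n), (S.card : ℝ) ≤ α * n →
      δ * c * S.card ≤ ((Finset.univ.filter (fun v : R => ∃ u ∈ S, ∃ i, νe v i = u)).card : ℝ))
    (C₀ : Submodule (ZMod 2) (Fin d → ZMod 2))
    (hd₀min : ∀ w ∈ C₀, w ≠ 0 → d₀ ≤ hammingNorm w)
    (hd₀ex : ∃ w ∈ C₀, w ≠ 0 ∧ hammingNorm w = d₀)
    (hd₀2 : 2 ≤ d₀)
    (x y : Fin n → ZMod 2)
    (hy : ∀ v : R, (fun i => y (νe v i)) ∈ C₀)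
    (hdxy : (hammingDist x y : ℝ) ≤ α * n)
    (F : Finset (Fin n)) (hF : F = Finset.univ.filter (fun i => x i ≠ y i))
    (U : Finset R) (hU : U = Finset.univ.filter (fun v : R => (fun i => x (νe v i)) ∉ C₀))
    (Nle : Finset R) (hNle : Nle = Finset.univ.filter (fun v : R =>
      0 < (F.filter (fun u => ∃ i, νe v i = u)).card ∧
      (F.filter (fun u => ∃ i, νe v i = u)).card ≤ d₀ - 1)) :
    (U.card : ℝ) ≤ c * F.card ∧ (Nle.card : ℝ) ≤ U.card ∧
      (δ * d₀ - 1) / (d₀ - 1) * (c * F.card) ≤ (Nle.card : ℝ) := by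
  subst hF hU hNle
  exact stmt3_general (α := α) hinj (fun u => (hleft u).le)
    (by simpa [rightNeighbors, CheckAdj] using hexp)
    (pairwise_le_hammingDist_of_le_hammingNorm (C := C₀.toAddSubgroup) hd₀min) hd₀2 hy
    (by simpa using hdxy)
end

section
/- For fixed δ ∈ (0,1) and k > 1 with k ≤ 1/(2(1 − δ)), the Size-Expansion Function satisfies f_δ(k) = 1 − (1 − δ)k. -/
/-- A sequence `β : ℕ →₀ ℝ` (finitely supported) is feasible for the LP defining the
Size-Expansion Function `f_δ(k)`: all `β i ≥ 0`, indexed by `i ≥ 1`,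
`Σ i·β_i = k` and `Σ (1 − (1−1/k)^i)·β_i ≥ δ`. -/
def SEFeasible (δ k : ℝ) (β : ℕ →₀ ℝ) : Prop :=
  (∀ i, 0 ≤ β i) ∧ β 0 = 0 ∧
    (β.sum fun i b => (i : ℝ) * b) = k ∧
    δ ≤ (β.sum fun i b => (1 - (1 - 1 / k) ^ i) * b)

/-- The Size-Expansion Function `f_δ(k)`: the infimum of `(1/k)·Σ β_i` over
feasible sequences. -/
noncomputable def sizeExpansionFun (δ k : ℝ) : ℝ :=
  sInf {y : ℝ | ∃ β : ℕ →₀ ℝ, SEFeasible δ k β ∧ y = (1 / k) * (β.sum fun _ b => b)}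

/-!
With `x = 1 - 1 / k ∈ [0, 1)`, the sequence `i ↦ 1 - x ^ i` is concave, so on `i ≥ 1` it lies below
the line through its values at `i = 1` and `i = 2`. Multiplied by `k ^ 2` this says that
`(-(k - 1), k ^ 2)` is dual feasible, and weak duality bounds the objective from below by
`1 - (1 - δ) * k`. The bound is tight on `i ∈ {1, 2}`, and solving both primal constraints with
equality there gives nonnegative weights as long as `2 * (1 - δ) * k ≤ 1`.
-/

open Finset

theorem geom_sum_succ_le_one_add_mul {R : Type*} [Semiring R] [PartialOrder R] [IsOrderedRing R]
    {x : R} (hx₀ : 0 ≤ x) (hx₁ : x ≤ 1) (n : ℕ) :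
    ∑ i ∈ range (n + 1), x ^ i ≤ 1 + n * x := by
  have pow_succ_le : ∀ i ∈ range n, x ^ (i + 1) ≤ x := fun i _ =>
    pow_le_of_le_one hx₀ hx₁ i.succ_ne_zero
  calc ∑ i ∈ range (n + 1), x ^ i = 1 + ∑ i ∈ range n, x ^ (i + 1) := by
        rw [sum_range_succ', pow_zero, add_comm]
    _ ≤ 1 + n * x := by
        gcongr
        simpa using sum_le_card_nsmul _ _ _ pow_succ_le

theorem one_sub_pow_succ_le {R : Type*} [Ring R] [PartialOrder R] [IsOrderedRing R]
    {x : R} (hx₀ : 0 ≤ x) (hx₁ : x ≤ 1) (n : ℕ) :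
    1 - x ^ (n + 1) ≤ (1 - x) * (1 + n * x) := by
  rw [← mul_neg_geom_sum]
  exact mul_le_mul_of_nonneg_left (geom_sum_succ_le_one_add_mul hx₀ hx₁ n) (sub_nonneg.2 hx₁)

/-- Feasibility for the linear program dual to the one defining `f_δ(k)`, without the factor `1 / k`
in the objective: `y` is the multiplier of the size equation, `z` that of the expansion inequality.
The constraint of the primal variable `β_i`, `i ≥ 1`, is stated at `i = n + 1`. -/
def SEDualFeasible (k y z : ℝ) : Prop :=
  0 ≤ z ∧ ∀ n : ℕ, y * (n + 1 : ℕ) + z * (1 - (1 - 1 / k) ^ (n + 1)) ≤ 1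

theorem SEFeasible.dual_objective_le_sum {δ k y z : ℝ} {β : ℕ →₀ ℝ} (hβ : SEFeasible δ k β)
    (hyz : SEDualFeasible k y z) : y * k + z * δ ≤ β.sum fun _ b => b := by
  obtain ⟨β_nonneg, β_zero, sum_size, le_sum_expansion⟩ := hβ
  obtain ⟨z_nonneg, dual_le_one⟩ := hyz
  calc y * k + z * δ
      ≤ y * (β.sum fun i b => (i : ℝ) * b) +
          z * (β.sum fun i b => (1 - (1 - 1 / k) ^ i) * b) := by
        rw [sum_size]
        gcongr
    _ = β.sum fun i b => (y * i + z * (1 - (1 - 1 / k) ^ i)) * b := by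
        rw [Finsupp.mul_sum, Finsupp.mul_sum, ← Finsupp.sum_add]
        simp only [add_mul, mul_assoc]
    _ ≤ β.sum fun _ b => b := by
        refine sum_le_sum fun i _ => ?_
        cases i with
        | zero => simp [β_zero]
        | succ n => exact mul_le_of_le_one_left (β_nonneg _) (dual_le_one n)

theorem seDualFeasible_neg_sub_one_sq {k : ℝ} (hk : 1 ≤ k) :
    SEDualFeasible k (-(k - 1)) (k ^ 2) := by
  refine ⟨sq_nonneg k, fun n => ?_⟩
  have hk₀ : 0 < k := by linarith
  have hx₀ : 0 ≤ 1 - 1 / k := sub_nonneg.2 ((div_le_one hk₀).2 hk)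
  have hx₁ : 1 - 1 / k ≤ 1 := sub_le_self _ (by positivity)
  calc -(k - 1) * (n + 1 : ℕ) + k ^ 2 * (1 - (1 - 1 / k) ^ (n + 1))
      ≤ -(k - 1) * (n + 1 : ℕ) + k ^ 2 * ((1 - (1 - 1 / k)) * (1 + n * (1 - 1 / k))) := by
        gcongr
        exact one_sub_pow_succ_le hx₀ hx₁ n
    _ = 1 := by
        push_cast
        field_simp
        ring

theorem SEFeasible.one_sub_mul_le {δ k : ℝ} {β : ℕ →₀ ℝ} (hβ : SEFeasible δ k β) (hk : 1 ≤ k) :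
    1 - (1 - δ) * k ≤ (1 / k) * (β.sum fun _ b => b) := by
  have hk₀ : 0 < k := by linarith
  calc 1 - (1 - δ) * k = (1 / k) * (-(k - 1) * k + k ^ 2 * δ) := by
        field_simp
        ring
    _ ≤ (1 / k) * (β.sum fun _ b => b) :=
        mul_le_mul_of_nonneg_left (hβ.dual_objective_le_sum (seDualFeasible_neg_sub_one_sq hk))
          (one_div_pos.2 hk₀).le

/-- The optimal solution of the linear program defining `f_δ(k)` when `2 * (1 - δ) * k ≤ 1`: the
sequence supported on `{1, 2}` for which both constraints hold with equality. -/
noncomputable def twoPointSolution (δ k : ℝ) : ℕ →₀ ℝ :=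
  Finsupp.single 1 (k - 2 * ((1 - δ) * k ^ 2)) + Finsupp.single 2 ((1 - δ) * k ^ 2)

theorem twoPointSolution_sum_mul (δ k : ℝ) (c : ℕ → ℝ) :
    ((twoPointSolution δ k).sum fun i b => c i * b) =
      c 1 * (k - 2 * ((1 - δ) * k ^ 2)) + c 2 * ((1 - δ) * k ^ 2) := by
  rw [twoPointSolution, Finsupp.sum_add_index' (by simp) (fun _ _ _ => mul_add _ _ _),
    Finsupp.sum_single_index (mul_zero _), Finsupp.sum_single_index (mul_zero _)]

theorem twoPointSolution_nonneg {δ k : ℝ} (hδ : δ ≤ 1) (hk : 0 ≤ k) (hδk : 2 * (1 - δ) * k ≤ 1) :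
    0 ≤ twoPointSolution δ k := by
  have weight_one_nonneg : 0 ≤ k - 2 * ((1 - δ) * k ^ 2) := by
    linarith [mul_le_mul_of_nonneg_left hδk hk]
  have weight_two_nonneg : 0 ≤ (1 - δ) * k ^ 2 := mul_nonneg (sub_nonneg.2 hδ) (sq_nonneg k)
  exact add_nonneg (Finsupp.single_nonneg.2 weight_one_nonneg)
    (Finsupp.single_nonneg.2 weight_two_nonneg)

theorem seFeasible_twoPointSolution {δ k : ℝ} (hδ : δ ≤ 1) (hk : 0 < k)
    (hδk : 2 * (1 - δ) * k ≤ 1) : SEFeasible δ k (twoPointSolution δ k) := by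
  refine ⟨twoPointSolution_nonneg hδ hk.le hδk, by simp [twoPointSolution], ?size, ?expansion⟩
  case size =>
    rw [twoPointSolution_sum_mul]
    push_cast
    ring
  case expansion =>
    rw [twoPointSolution_sum_mul δ k fun i => 1 - (1 - 1 / k) ^ i]
    apply le_of_eq
    field_simp
    ring

theorem one_div_mul_twoPointSolution_sum (δ : ℝ) {k : ℝ} (hk : k ≠ 0) :
    (1 / k) * ((twoPointSolution δ k).sum fun _ b => b) = 1 - (1 - δ) * k := by
  have sum_eq : ((twoPointSolution δ k).sum fun _ b => b) = k - (1 - δ) * k ^ 2 := by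
    have := twoPointSolution_sum_mul δ k 1
    simp only [Pi.one_apply, one_mul] at this
    rw [this]
    ring
  rw [sum_eq]
  field_simp

/-- For `δ ∈ (0,1)` and `1 < k ≤ 1/(2(1−δ))`,
`f_δ(k) = 1 − (1 − δ)k`. -/
theorem stmt10 (δ k : ℝ) (hδ0 : 0 < δ) (hδ1 : δ < 1) (hk : 1 < k)
    (hk2 : k ≤ 1 / (2 * (1 - δ))) :
    sizeExpansionFun δ k = 1 - (1 - δ) * k := by
  have hk₀ : 0 < k := by linarith
  have hδk : 2 * (1 - δ) * k ≤ 1 := by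
    rwa [le_div_iff₀ (by linarith), mul_comm] at hk2
  refine IsLeast.csInf_eq ⟨?attained, ?lower_bound⟩
  case attained =>
    exact ⟨twoPointSolution δ k, seFeasible_twoPointSolution hδ1.le hk₀ hδk,
      (one_div_mul_twoPointSolution_sum δ hk₀.ne').symm⟩
  case lower_bound =>
    rintro _ ⟨β, hβ, rfl⟩
    exact hβ.one_sub_mul_le hk.le
end
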